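/- arXiv:0803.4254 — 2 statements merged into one kernel-verified Lean document; each statement's English description precedes it below -/
import Mathlib

section
/- Let K = {(cos t, sin t, t) : t ∈ [0, 2π]} ⊂ ℝ³, let C be the convex hull of K, and let P : ℝ³ → ℝ² be the orthogonal projection P(x, y, z) = (x, y). Then there is no map s : P(C) → C satisfying P(s(y)) = y for all y ∈ P(C) that is continuous at the point (1, 0); in particular, the multivalued inverse (P|_C)⁻¹ : P(C) → C admits no continuous selection. -/
open Real

/-- One full rotation of the spiral `{(cos t, sin t, t) : 0 ≤ t ≤ 2π}` in `ℝ³`. -/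
noncomputable def spiralK : Set (ℝ × ℝ × ℝ) :=
  (fun t : ℝ => (Real.cos t, Real.sin t, t)) '' Set.Icc 0 (2 * Real.pi)

/-- The convex hull of one full rotation of the spiral. -/
noncomputable def spiralC : Set (ℝ × ℝ × ℝ) := convexHull ℝ spiralK

/-- The orthogonal projection `P : ℝ³ → ℝ²`, `P (x, y, z) = (x, y)`. -/
noncomputable def projP : (ℝ × ℝ × ℝ) →L[ℝ] ℝ × ℝ :=
  (ContinuousLinearMap.fst ℝ ℝ (ℝ × ℝ)).prod
    ((ContinuousLinearMap.fst ℝ ℝ ℝ).comp (ContinuousLinearMap.snd ℝ ℝ (ℝ × ℝ)))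

theorem spiral_height {θ : ℝ} (h0 : 0 < θ) (h2 : θ < 2 * Real.pi) {p : ℝ × ℝ × ℝ}
    (hp : p ∈ spiralC) (hP : projP p = (Real.cos θ, Real.sin θ)) : p.2.2 = θ := by
  have hconv : Convex ℝ {q : ℝ × ℝ × ℝ | Real.cos θ * q.1 + Real.sin θ * q.2.1 ≤ 1 ∧
      (Real.cos θ * q.1 + Real.sin θ * q.2.1 = 1 → q.2.2 = θ)} := by
    rintro ⟨x, y, z⟩ ⟨hq, hq'⟩ ⟨x', y', z'⟩ ⟨hr, hr'⟩ a b ha hb hab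
    simp only [Set.mem_setOf_eq, Prod.smul_mk, Prod.mk_add_mk, smul_eq_mul] at *
    have e : Real.cos θ * (a * x + b * x') + Real.sin θ * (a * y + b * y') =
      a * (Real.cos θ * x + Real.sin θ * y) + b * (Real.cos θ * x' + Real.sin θ * y') := by ring
    rw [e]
    generalize Real.cos θ * x + Real.sin θ * y = u at *
    generalize Real.cos θ * x' + Real.sin θ * y' = v at *
    have hu := mul_le_mul_of_nonneg_left hq ha
    have hv := mul_le_mul_of_nonneg_left hr hb
    refine ⟨by linarith, fun h => ?_⟩
    have h3 : a * u = a := by linarith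
    have h4 : b * v = b := by linarith
    have h5 : a * z = a * θ := by
      rcases eq_or_ne a 0 with h | h
      · simp [h]
      · rw [hq' (mul_left_cancel₀ h (by linarith))]
    have h6 : b * z' = b * θ := by
      rcases eq_or_ne b 0 with h | h
      · simp [h]
      · rw [hr' (mul_left_cancel₀ h (by linarith))]
    rw [h5, h6, ← add_mul, hab, one_mul]
  have hsub := convexHull_min (s := spiralK) (by
    rintro _ ⟨t, ⟨ht0, ht2⟩, rfl⟩
    simp only [Set.mem_setOf_eq]
    rw [← Real.cos_sub]
    refine ⟨Real.cos_le_one _, fun h => ?_⟩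
    have := (Real.cos_eq_one_iff_of_lt_of_lt (by linarith) (by linarith)).1 h
    linarith) hconv
  have h := (hsub hp).2
  simp only [projP, ContinuousLinearMap.prod_apply, ContinuousLinearMap.comp_apply,
    ContinuousLinearMap.coe_fst', ContinuousLinearMap.coe_snd', Prod.mk.injEq] at hP
  apply h
  rw [hP.1, hP.2]
  nlinarith [Real.sin_sq_add_cos_sq θ]

theorem spiral_mem {θ : ℝ} (h0 : 0 ≤ θ) (h2 : θ ≤ 2 * Real.pi) :
    ((Real.cos θ, Real.sin θ) : ℝ × ℝ) ∈ ⇑projP '' spiralC :=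
  ⟨(Real.cos θ, Real.sin θ, θ), subset_convexHull ℝ _ ⟨θ, ⟨h0, h2⟩, rfl⟩, rfl⟩

/-- Lemma 2.2, second (sharpened) assertion: no selection `s` of the multivalued inverse
`(P|_C)⁻¹ : P(C) → C` is continuous at the point `(1, 0)`; in particular `(P|_C)⁻¹` admits
no continuous selection. -/
theorem spiral_no_selection_continuousAt
    (h1 : ((1, 0) : ℝ × ℝ) ∈ ⇑projP '' spiralC)
    (s : ↥(⇑projP '' spiralC) → ↥spiralC)
    (hs : ∀ y : ↥(⇑projP '' spiralC), projP (s y : ℝ × ℝ × ℝ) = (y : ℝ × ℝ)) :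
    ¬ ContinuousAt s ⟨(1, 0), h1⟩ := by
  intro hc
  obtain ⟨δ, hδ, H⟩ := Metric.continuousAt_iff.1 hc 1 one_pos
  have hpi := Real.pi_gt_three
  obtain ⟨θ, h0, hθ1, hθδ⟩ : ∃ θ : ℝ, 0 < θ ∧ θ < 1 ∧ θ < δ :=
    ⟨min 1 δ / 2, by positivity, by linarith [min_le_left 1 δ, lt_min one_pos hδ],
      by linarith [min_le_right 1 δ, lt_min one_pos hδ]⟩
  have hcos : |Real.cos θ - 1| < δ := by
    rw [abs_lt]
    constructor
    · nlinarith [Real.one_sub_sq_div_two_le_cos (x := θ)]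
    · linarith [Real.cos_le_one θ]
  have hsin : |Real.sin θ| < δ := by
    have := Real.abs_sin_le_abs (x := θ)
    rw [abs_of_pos h0] at this
    linarith
  have key : ∀ t : ℝ, 0 < t → t < 2 * Real.pi → |Real.cos t - 1| < δ → |Real.sin t| < δ →
      |t - (s ⟨(1, 0), h1⟩ : ℝ × ℝ × ℝ).2.2| < 1 := by
    intro t ht0 ht2 hc' hs'
    have hm := spiral_mem ht0.le ht2.le
    have h := H (x := ⟨_, hm⟩) (by
      rw [Subtype.dist_eq, Prod.dist_eq, Real.dist_eq, Real.dist_eq]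
      simpa using ⟨hc', hs'⟩)
    rw [Subtype.dist_eq, Prod.dist_eq, Prod.dist_eq,
      spiral_height ht0 ht2 (s ⟨_, hm⟩).2 (hs ⟨_, hm⟩)] at h
    exact ((le_max_right _ _).trans (le_max_right _ _)).trans_lt h
  have k1 := abs_lt.1 (key θ h0 (by linarith) hcos hsin)
  have k2 := abs_lt.1 (key (2 * Real.pi - θ) (by linarith) (by linarith)
    (by rwa [Real.cos_two_pi_sub]) (by rwa [Real.sin_two_pi_sub, abs_neg]))
  linarith [k1.1, k1.2, k2.1, k2.2]
end

section
/- Let K = {(cos t, sin t, t) : t ∈ [0, 2π]} ⊂ ℝ³, let C be the convex hull of K, let P : ℝ³ → ℝ² be the orthogonal projection P(x, y, z) = (x, y), let D = P(C), and define the linear surjection L : ℝ³ × ℝ → ℝ² by L(v, t) = P(v). Then L(C × [0, 1]) = D and the identity map of D is a continuous selection of the constant multivalued map x ↦ L(C × [0,1]), but there exist no continuous maps f₁ : D → C and f₂ : D → [0, 1] such that L(f₁(u), f₂(u)) = u for every u ∈ D. -/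
open Real

/-- The linear surjection `L : ℝ³ × ℝ → ℝ²`, `L (v, t) = P v`, which forgets the last factor. -/
noncomputable def exL : ((ℝ × ℝ × ℝ) × ℝ) →L[ℝ] ℝ × ℝ :=
  projP.comp (ContinuousLinearMap.fst ℝ (ℝ × ℝ × ℝ) ℝ)

theorem spiral_fiber (t : ℝ) (ht : t ∈ Set.Ioo 0 (2 * Real.pi)) (p : ℝ × ℝ × ℝ)
    (hp : p ∈ spiralC) (h1 : p.1 = Real.cos t) (h2 : p.2.1 = Real.sin t) : p.2.2 = t := by
  let S : Set (ℝ × ℝ × ℝ) := {q | q.1 * Real.cos t + q.2.1 * Real.sin t < 1 ∨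
    (q.1 * Real.cos t + q.2.1 * Real.sin t = 1 ∧ q.2.2 = t)}
  have hS : Convex ℝ S := by
    rw [convex_iff_forall_pos]
    rintro ⟨x, y, z⟩ hx ⟨x', y', z'⟩ hy a b ha hb hab
    simp only [S, Set.mem_setOf_eq, Prod.smul_mk, Prod.mk_add_mk, smul_eq_mul] at hx hy ⊢
    have e : (a * x + b * x') * Real.cos t + (a * y + b * y') * Real.sin t =
      a * (x * Real.cos t + y * Real.sin t) + b * (x' * Real.cos t + y' * Real.sin t) := by ring
    rw [e]
    rcases hx with hx | ⟨hx, rfl⟩ <;> rcases hy with hy | ⟨hy, hz⟩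
    · left; nlinarith
    · left; nlinarith
    · left; nlinarith
    · right
      rw [hx, hy, hz]
      exact ⟨by linarith, by rw [← add_mul, hab, one_mul]⟩
  have hK : spiralK ⊆ S := by
    rintro _ ⟨s, hs, rfl⟩
    simp only [S, Set.mem_setOf_eq]
    rw [← Real.cos_sub]
    rcases (Real.cos_le_one (s - t)).lt_or_eq with h | h
    · exact Or.inl h
    · right
      refine ⟨h, ?_⟩
      have := (Real.cos_eq_one_iff_of_lt_of_lt (x := s - t)
        (by linarith [hs.1, ht.2]) (by linarith [hs.2, ht.1])).1 h
      linarith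
  have : p ∈ S := convexHull_min hK hS hp
  have e := Real.sin_sq_add_cos_sq t
  rcases this with h | h
  · rw [h1, h2] at h; nlinarith
  · exact h.2

theorem circle_mem (t : ℝ) : (Real.cos t, Real.sin t) ∈ ⇑projP '' spiralC := by
  have hper : Function.Periodic (fun t : ℝ => (Real.cos t, Real.sin t)) (2 * Real.pi) := by
    intro t; simp
  obtain ⟨s, hs, h⟩ := hper.exists_mem_Ico₀ (by positivity) t
  refine ⟨(Real.cos s, Real.sin s, s), subset_convexHull ℝ _ ⟨s, ⟨hs.1, hs.2.le⟩, rfl⟩, ?_⟩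
  exact h.symm

/-- Example 3.2: with `C = conv K` the convex hull of the spiral, `D = P(C)` and
`L(v, t) = P(v)`, we have `L(C × [0,1]) = D`, so the identity of `D` is a continuous selection
of the constant multivalued map with value `L(C × [0,1])`; but there are no continuous maps
`f₁ : D → C`, `f₂ : D → [0,1]` with `L(f₁ u, f₂ u) = u` for all `u ∈ D`. -/
theorem example_no_splitting :
    ⇑exL '' (spiralC ×ˢ Set.Icc (0 : ℝ) 1) = ⇑projP '' spiralC ∧
    Continuous (fun u : ↥(⇑projP '' spiralC) => (u : ℝ × ℝ)) ∧
    ¬ ∃ (f₁ : ↥(⇑projP '' spiralC) → ↥spiralC)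
        (f₂ : ↥(⇑projP '' spiralC) → ↥(Set.Icc (0 : ℝ) 1)),
        Continuous f₁ ∧ Continuous f₂ ∧
        ∀ u : ↥(⇑projP '' spiralC),
          exL ((f₁ u : ℝ × ℝ × ℝ), (f₂ u : ℝ)) = (u : ℝ × ℝ) := by
  refine ⟨?_, continuous_subtype_val, ?_⟩
  · ext u
    constructor
    · rintro ⟨⟨v, r⟩, hv, rfl⟩
      exact ⟨v, hv.1, rfl⟩
    · rintro ⟨v, hv, rfl⟩
      exact ⟨(v, 0), ⟨hv, by simp⟩, rfl⟩
  · rintro ⟨f₁, f₂, hf₁, -, h⟩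
    let u : ℝ → ↥(⇑projP '' spiralC) := fun t => ⟨(Real.cos t, Real.sin t), circle_mem t⟩
    have hu : Continuous u := by
      apply Continuous.subtype_mk
      fun_prop
    let g : ℝ → ℝ := fun t => (f₁ (u t) : ℝ × ℝ × ℝ).2.2
    have hg : Continuous g :=
      continuous_snd.comp (continuous_snd.comp (continuous_subtype_val.comp (hf₁.comp hu)))
    have hpi := Real.pi_pos
    have heq : Set.EqOn g id (Set.Ioo 0 (2 * Real.pi)) := by
      intro t ht
      have := h (u t)
      exact spiral_fiber t ht _ (f₁ (u t)).2 (congrArg Prod.fst this) (congrArg Prod.snd this)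
    have hcl := heq.closure hg continuous_id
    rw [closure_Ioo (by positivity)] at hcl
    have a := hcl (Set.left_mem_Icc.2 (by positivity))
    have b := hcl (Set.right_mem_Icc.2 (by positivity))
    have hu2 : u 0 = u (2 * Real.pi) := by
      apply Subtype.ext
      simp [u]
    have : g 0 = g (2 * Real.pi) := by simp only [g, hu2]
    simp only [id] at a b
    linarith
end
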